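/- For every ρ ∈ (0, 3) and every x_0 ∈ ℝ, the gradient-descent sequence with step-size 1 on f_ρ, defined by x_{t+1} = x_t − f_ρ'(x_t), converges (i.e. the sequence (x_t) has a limit in ℝ). -/

import Mathlib

/-- The piecewise function `f_ρ` from the paper's discussion of the logistic map
embedded in gradient descent with step-size 1. -/
noncomputable def frho (ρ : ℝ) (x : ℝ) : ℝ :=
  if |x| ≤ 1 then
    ρ / 3 * |x| ^ 3 + (1 - ρ) / 2 * x ^ 2 + (ρ - 1) ^ 3 / (6 * ρ ^ 2)
  else if |x| ≤ 3 / 2 then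
    -(ρ / 3) * |x| ^ 3 + (1 + 3 * ρ) / 2 * x ^ 2 - 2 * ρ * |x| +
      ((ρ - 1) ^ 3 + 4 * ρ ^ 3) / (6 * ρ ^ 2)
  else
    1 / 2 * x ^ 2 + ρ / 4 * |x| + (4 * (ρ - 1) ^ 3 - 11 * ρ ^ 3) / (24 * ρ ^ 2)

/-!
The gradient step of `f_ρ` is an odd map with values in `[-ρ/4, ρ/4]`, and it agrees with the
logistic map `y ↦ ρ y (1 - y)` on `[0, 1]`. Hence, after one step and up to a sign, every
gradient-descent sequence is a logistic orbit.

For `ρ ≤ 1` logistic orbits decrease. For `1 < ρ < 3`, two steps multiply the displacement from the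
fixed point `p = 1 - 1/ρ` by `M(u) = (1 - u) (1 - ρ u + u²)` with `u = ρ y`. The discriminant of
`(1 - M(u)) / u = u² - (1 + ρ) u + (1 + ρ)` is `(ρ + 1) (ρ - 3) < 0` (there is no 2-cycle), so `M`
stays away from `1` as long as `u` stays away from `0`, and `M ≥ -1/4` because `y ≤ ρ/4`. The orbit
of a positive point of `[0, ρ/4]` stays away from `0` because the logistic map is concave.
-/

open Filter Set Topology

section ForwardOrbit

variable {α : Type*}

/-- `y` is a forward orbit of `g`, that is, `y (t + 1) = g (y t)` at all times `t`; the starting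
point `y 0` is left free. -/
def IsForwardOrbit (g : α → α) (y : ℕ → α) : Prop :=
  ∀ t, y (t + 1) = g (y t)

namespace IsForwardOrbit

variable {g h : α → α} {y : ℕ → α} {s : Set α}

theorem shift (hy : IsForwardOrbit g y) : IsForwardOrbit g fun t => y (t + 1) :=
  fun t => hy (t + 1)

theorem mem_of_mapsTo (hy : IsForwardOrbit g y) (hs : MapsTo g s s) (h0 : y 0 ∈ s) (t : ℕ) :
    y t ∈ s := by
  induction t with
  | zero => exact h0
  | succ t ih => exact hy t ▸ hs ih

theorem congr_of_mem (hy : IsForwardOrbit g y) (hgh : EqOn g h s) (hs : ∀ t, y t ∈ s) :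
    IsForwardOrbit h y :=
  fun t => (hy t).trans (hgh (hs t))

theorem neg [Neg α] (hy : IsForwardOrbit g y) (hg : g.Odd) : IsForwardOrbit g fun t => -y t :=
  fun t => (congrArg (-·) (hy t)).trans (hg (y t)).symm

end IsForwardOrbit

end ForwardOrbit

theorem tendsto_of_dist_add_le_mul {α : Type*} [PseudoMetricSpace α] {y : ℕ → α} {p : α} {k : ℝ}
    {N : ℕ} (hN : 0 < N) (hk₀ : 0 ≤ k) (hk₁ : k < 1)
    (h : ∀ t, dist (y (t + N)) p ≤ k * dist (y t) p) : Tendsto y atTop (𝓝 p) := by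
  have geometric (r q : ℕ) : dist (y (r + N * q)) p ≤ k ^ q * dist (y r) p := by
    induction q with
    | zero => simp
    | succ q ih =>
      calc dist (y (r + N * (q + 1))) p
          = dist (y (r + N * q + N)) p := by rw [mul_add_one, add_assoc]
        _ ≤ k * dist (y (r + N * q)) p := h _
        _ ≤ k * (k ^ q * dist (y r) p) := by gcongr
        _ = k ^ (q + 1) * dist (y r) p := by ring
  set C := ∑ r ∈ Finset.range N, dist (y r) p
  have dist_le (t : ℕ) : dist (y t) p ≤ k ^ (t / N) * C :=
    calc dist (y t) p = dist (y (t % N + N * (t / N))) p := by rw [Nat.mod_add_div]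
      _ ≤ k ^ (t / N) * dist (y (t % N)) p := geometric _ _
      _ ≤ k ^ (t / N) * C := by
        gcongr
        exact Finset.single_le_sum (f := fun r => dist (y r) p) (fun _ _ => dist_nonneg)
          (Finset.mem_range.2 (Nat.mod_lt t hN))
  have bound_tendsto : Tendsto (fun t => k ^ (t / N) * C) atTop (𝓝 0) := by
    simpa only [zero_mul, Function.comp_def] using
      ((tendsto_pow_atTop_nhds_zero_of_lt_one hk₀ hk₁).comp
        (Nat.tendsto_div_const_atTop hN.ne')).mul_const C
  exact tendsto_iff_dist_tendsto_zero.2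
    (squeeze_zero (fun _ => dist_nonneg) dist_le bound_tendsto)

theorem hasDerivAt_posPart_pow {n : ℕ} (hn : 1 < n) (x : ℝ) :
    HasDerivAt (fun z : ℝ => z⁺ ^ n) (n * x⁺ ^ (n - 1)) x := by
  have hasDerivAt_of_ne (z : ℝ) (hz : z ≠ 0) :
      HasDerivAt (fun w : ℝ => w⁺ ^ n) (n * z⁺ ^ (n - 1)) z := by
    rcases hz.lt_or_gt with hz | hz
    · have : (fun w : ℝ => w⁺ ^ n) =ᶠ[𝓝 z] fun _ => 0 := by
        filter_upwards [gt_mem_nhds hz] with w hw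
        rw [posPart_of_nonpos hw.le, zero_pow (by lia)]
      rw [posPart_of_nonpos hz.le, zero_pow (by lia), mul_zero]
      exact (hasDerivAt_const z 0).congr_of_eventuallyEq this
    · have : (fun w : ℝ => w⁺ ^ n) =ᶠ[𝓝 z] fun w => w ^ n := by
        filter_upwards [lt_mem_nhds hz] with w hw
        rw [posPart_of_nonneg hw.le]
      rw [posPart_of_nonneg hz.le]
      exact (hasDerivAt_pow n z).congr_of_eventuallyEq this
  have continuous_pow_posPart (j : ℕ) : Continuous fun z : ℝ => z⁺ ^ j := continuous_posPart.pow j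
  exact hasDerivAt_of_hasDerivAt_of_ne' hasDerivAt_of_ne
    (continuous_pow_posPart n).continuousAt
    (continuous_const.mul (continuous_pow_posPart (n - 1))).continuousAt x

section Logistic

/-- The logistic map with parameter `ρ`. -/
def logisticMap (ρ y : ℝ) : ℝ :=
  ρ * y * (1 - y)

variable {ρ m y₀ u : ℝ} {y : ℕ → ℝ}

theorem logisticMap_nonneg (hρ : 0 ≤ ρ) (hy : y₀ ∈ Icc 0 1) : 0 ≤ logisticMap ρ y₀ :=
  mul_nonneg (mul_nonneg hρ hy.1) (sub_nonneg.2 hy.2)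

theorem logisticMap_le (hρ : 0 ≤ ρ) (y₀ : ℝ) : logisticMap ρ y₀ ≤ ρ / 4 := by
  rw [logisticMap]
  linarith [mul_nonneg hρ (sq_nonneg (y₀ - 1 / 2))]

theorem mapsTo_logisticMap_Icc (hρ₀ : 0 ≤ ρ) (hρ₄ : ρ ≤ 4) :
    MapsTo (logisticMap ρ) (Icc 0 1) (Icc 0 1) :=
  fun y₀ hy => ⟨logisticMap_nonneg hρ₀ hy, (logisticMap_le hρ₀ y₀).trans (by linarith)⟩

theorem concaveOn_logisticMap (hρ : 0 ≤ ρ) : ConcaveOn ℝ univ (logisticMap ρ) := by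
  refine ⟨convex_univ, fun x _ z _ a b ha hb hab => ?_⟩
  obtain rfl : b = 1 - a := by linarith
  have gap : logisticMap ρ (a * x + (1 - a) * z) -
      (a * logisticMap ρ x + (1 - a) * logisticMap ρ z) = ρ * (a * (1 - a)) * (x - z) ^ 2 := by
    simp only [logisticMap]
    ring
  have : 0 ≤ ρ * (a * (1 - a)) * (x - z) ^ 2 := by positivity
  simp only [smul_eq_mul]
  linarith

theorem le_logisticMap_of_le_fixedPoint (hρ : 0 < ρ) (hm₀ : 0 ≤ m) (hm : m ≤ 1 - ρ⁻¹) :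
    m ≤ logisticMap ρ m := by
  have : 1 ≤ ρ * (1 - m) := (inv_le_iff_one_le_mul₀' hρ).1 (by linarith)
  calc m = m * 1 := (mul_one m).symm
    _ ≤ m * (ρ * (1 - m)) := by gcongr
    _ = logisticMap ρ m := by rw [logisticMap]; ring

theorem exists_mapsTo_logisticMap_Icc (hρ₁ : 1 < ρ) (hρ₄ : ρ < 4) (hy : 0 < y₀) :
    ∃ m > 0, m ≤ y₀ ∧ MapsTo (logisticMap ρ) (Icc m (ρ / 4)) (Icc m (ρ / 4)) := by
  have hρ₀ : 0 < ρ := by linarith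
  have fixedPoint_pos : 0 < 1 - ρ⁻¹ := sub_pos.2 (inv_lt_one_of_one_lt₀ hρ₁)
  have image_pos : 0 < logisticMap ρ (ρ / 4) :=
    mul_pos (by positivity) (by linarith)
  set m := min y₀ (min (1 - ρ⁻¹) (logisticMap ρ (ρ / 4)))
  have hm₀ : 0 < m := lt_min hy (lt_min fixedPoint_pos image_pos)
  have hm_left : m ≤ logisticMap ρ m :=
    le_logisticMap_of_le_fixedPoint hρ₀ hm₀.le ((min_le_right _ _).trans (min_le_left _ _))
  have hm_right : m ≤ logisticMap ρ (ρ / 4) := (min_le_right _ _).trans (min_le_right _ _)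
  refine ⟨m, hm₀, min_le_left _ _, fun z hz => ⟨?_, logisticMap_le hρ₀.le z⟩⟩
  refine (le_min hm_left hm_right).trans ?_
  exact (concaveOn_logisticMap hρ₀.le).min_le_of_mem_Icc (mem_univ _) (mem_univ _) hz

/-- The factor by which two logistic steps from `u / ρ` multiply the displacement from the fixed
point `1 - ρ⁻¹`. -/
def twoStepMultiplier (ρ u : ℝ) : ℝ :=
  (1 - u) * (1 - ρ * u + u ^ 2)

theorem logisticMap_logisticMap_sub_fixedPoint (hρ : ρ ≠ 0) (y₀ : ℝ) :
    logisticMap ρ (logisticMap ρ y₀) - (1 - ρ⁻¹) =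
      twoStepMultiplier ρ (ρ * y₀) * (y₀ - (1 - ρ⁻¹)) := by
  have one_step (z : ℝ) : logisticMap ρ z - (1 - ρ⁻¹) = (1 - ρ * z) * (z - (1 - ρ⁻¹)) := by
    rw [logisticMap]
    field_simp
    ring
  rw [one_step, one_step, logisticMap, twoStepMultiplier]
  ring

theorem twoStepMultiplier_le (hu : 0 ≤ u) :
    twoStepMultiplier ρ u ≤ 1 - u * ((1 + ρ) * (3 - ρ) / 4) := by
  have complete_square : 1 - twoStepMultiplier ρ u =
      u * (u - (1 + ρ) / 2) ^ 2 + u * ((1 + ρ) * (3 - ρ) / 4) := by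
    rw [twoStepMultiplier]
    ring
  have : 0 ≤ u * (u - (1 + ρ) / 2) ^ 2 := by positivity
  linarith

theorem neg_quarter_le_twoStepMultiplier (hρ : ρ ≤ 3) (hu₀ : 0 ≤ u) (hu : 4 / 3 * u ≤ ρ) :
    -(1 / 4) ≤ twoStepMultiplier ρ u := by
  rcases le_total u 1 with hu₁ | hu₁
  · calc -(1 / 4) ≤ (1 - u) ^ 3 - u * (1 - u) := by
          nlinarith [pow_nonneg (sub_nonneg.2 hu₁) 3, sq_nonneg (u - 1 / 2)]
      _ = (1 - u) * (1 - 3 * u + u ^ 2) := by ring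
      _ ≤ twoStepMultiplier ρ u := by
          have := sub_nonneg.2 hu₁
          rw [twoStepMultiplier]
          gcongr
  · calc -(1 / 4) ≤ -(2 / 3 * ((u - 1) * (2 - u))) := by linarith [sq_nonneg (u - 3 / 2)]
      _ ≤ -((u - 1) * (1 - u ^ 2 / 3)) := by
          -- tangent line of the square at `1`: `2 * u - 1 ≤ u ^ 2`
          linarith [mul_nonneg (sub_nonneg.2 hu₁) (sq_nonneg (u - 1))]
      _ = (1 - u) * (1 - 4 / 3 * u * u + u ^ 2) := by ring
      _ ≤ twoStepMultiplier ρ u := by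
          rw [twoStepMultiplier]
          refine mul_le_mul_of_nonpos_left ?_ (sub_nonpos.2 hu₁)
          gcongr

theorem tendsto_fixedPoint_of_logistic_orbit_mem_Icc (hρ₁ : 1 < ρ) (hρ₃ : ρ < 3) (hm : 0 < m)
    (hy : IsForwardOrbit (logisticMap ρ) y) (hmem : ∀ t, y t ∈ Icc m (ρ / 4)) :
    Tendsto y atTop (𝓝 (1 - ρ⁻¹)) := by
  have hρ₀ : 0 < ρ := by linarith
  set c := (1 + ρ) * (3 - ρ) / 4
  have : 0 < c := by
    have : 0 < 3 - ρ := sub_pos.2 hρ₃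
    positivity
  set k := max (1 - ρ * m * c) (1 / 4)
  have hk₀ : 0 ≤ k := le_max_of_le_right (by norm_num)
  have hk₁ : k < 1 := max_lt (sub_lt_self 1 (by positivity)) (by norm_num)
  refine tendsto_of_dist_add_le_mul two_pos hk₀ hk₁ fun t => ?_
  obtain ⟨hmy, hyρ⟩ := hmem t
  have hy₀ : 0 < y t := hm.trans_le hmy
  have four_thirds_le : 4 / 3 * (ρ * y t) ≤ ρ :=
    calc 4 / 3 * (ρ * y t) = ρ * (4 / 3 * y t) := by ring
      _ ≤ ρ := mul_le_of_le_one_right hρ₀.le (by linarith)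
  have multiplier_le : twoStepMultiplier ρ (ρ * y t) ≤ k :=
    calc twoStepMultiplier ρ (ρ * y t) ≤ 1 - ρ * y t * c := twoStepMultiplier_le (by positivity)
      _ ≤ 1 - ρ * m * c := by gcongr
      _ ≤ k := le_max_left _ _
  have le_multiplier : -k ≤ twoStepMultiplier ρ (ρ * y t) :=
    calc -k ≤ -(1 / 4) := neg_le_neg (le_max_right _ _)
      _ ≤ twoStepMultiplier ρ (ρ * y t) :=
        neg_quarter_le_twoStepMultiplier hρ₃.le (by positivity) four_thirds_le
  have two_steps : y (t + 2) = logisticMap ρ (logisticMap ρ (y t)) := by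
    rw [← hy t, ← hy (t + 1)]
  rw [Real.dist_eq, Real.dist_eq, two_steps, logisticMap_logisticMap_sub_fixedPoint hρ₀.ne',
    abs_mul]
  gcongr
  exact abs_le.2 ⟨le_multiplier, multiplier_le⟩

theorem antitone_of_logistic_orbit (hρ₀ : 0 ≤ ρ) (hρ₁ : ρ ≤ 1)
    (hy : IsForwardOrbit (logisticMap ρ) y) (hmem : ∀ t, 0 ≤ y t) : Antitone y := by
  refine antitone_nat_of_succ_le fun t => ?_
  have := hmem t
  calc y (t + 1) = ρ * y t - ρ * y t ^ 2 := by rw [hy t, logisticMap]; ring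
    _ ≤ ρ * y t := sub_le_self _ (by positivity)
    _ ≤ y t := mul_le_of_le_one_left this hρ₁

theorem exists_tendsto_of_logistic_orbit (hρ₀ : 0 ≤ ρ) (hρ₃ : ρ < 3)
    (hy : IsForwardOrbit (logisticMap ρ) y) (h0 : y 0 ∈ Icc 0 1) :
    ∃ l, Tendsto y atTop (𝓝 l) := by
  have hmem := hy.mem_of_mapsTo (mapsTo_logisticMap_Icc hρ₀ (by linarith)) h0
  rcases le_or_gt ρ 1 with hρ₁ | hρ₁
  · have hanti := antitone_of_logistic_orbit hρ₀ hρ₁ hy fun t => (hmem t).1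
    exact ⟨_, tendsto_atTop_ciInf hanti ⟨0, forall_mem_range.2 fun t => (hmem t).1⟩⟩
  suffices ∃ l, Tendsto (fun t => y (t + 1)) atTop (𝓝 l) by
    simpa only [tendsto_add_atTop_iff_nat] using this
  rcases (hmem 1).1.eq_or_lt with hy₁ | hy₁
  · have mapsTo_zero : MapsTo (logisticMap ρ) {0} {0} := by simp [logisticMap]
    have eq_zero (t : ℕ) : y (t + 1) = 0 := hy.shift.mem_of_mapsTo mapsTo_zero hy₁.symm t
    exact ⟨0, by simpa only [eq_zero] using tendsto_const_nhds⟩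
  · obtain ⟨m, hm, hmy, hmaps⟩ := exists_mapsTo_logisticMap_Icc hρ₁ (by linarith) hy₁
    have hy₁_mem : y 1 ∈ Icc m (ρ / 4) := ⟨hmy, hy 0 ▸ logisticMap_le hρ₀ _⟩
    exact ⟨_, tendsto_fixedPoint_of_logistic_orbit_mem_Icc hρ₁ hρ₃ hm hy.shift
      (hy.shift.mem_of_mapsTo hmaps hy₁_mem)⟩

end Logistic

section GradientStep

/-- One step of gradient descent with step-size `1` for `f`. -/
noncomputable def gradStep (f : ℝ → ℝ) (x : ℝ) : ℝ :=
  x - deriv f x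

theorem odd_gradStep {f : ℝ → ℝ} (hf : f.Even) : (gradStep f).Odd := by
  intro x
  have deriv_neg_arg : -deriv f (-x) = deriv f x := by
    simpa only [hf.eq] using (deriv_comp_neg f x).symm
  rw [gradStep, gradStep, ← deriv_neg_arg]
  ring

variable {ρ x : ℝ}

theorem even_frho (ρ : ℝ) : (frho ρ).Even :=
  fun x => by simp only [frho, abs_neg, neg_sq]

/-- Truncated cubes `(x - a)⁺ ^ 3` glue the pieces differentiably at the breakpoints `a`. -/
theorem frho_eq_of_nonneg (hρ : ρ ≠ 0) (hx : 0 ≤ x) :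
    frho ρ x = ρ / 3 * x ^ 3 + (1 - ρ) / 2 * x ^ 2 + (ρ - 1) ^ 3 / (6 * ρ ^ 2)
      - 2 * ρ / 3 * (x - 1)⁺ ^ 3 + ρ / 3 * (x - 3 / 2)⁺ ^ 3 := by
  rw [frho, abs_of_nonneg hx]
  split_ifs with h₁ h₂
  · rw [posPart_of_nonpos (by linarith), posPart_of_nonpos (by linarith)]
    ring
  · rw [posPart_of_nonneg (by linarith), posPart_of_nonpos (by linarith)]
    field_simp
    ring
  · rw [posPart_of_nonneg (by linarith), posPart_of_nonneg (by linarith)]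
    field_simp
    ring

theorem hasDerivAt_frho_of_pos (hρ : ρ ≠ 0) (hx : 0 < x) :
    HasDerivAt (frho ρ)
      (ρ * x ^ 2 + (1 - ρ) * x - 2 * ρ * (x - 1)⁺ ^ 2 + ρ * (x - 3 / 2)⁺ ^ 2) x := by
  have hasDerivAt_shift (a : ℝ) :
      HasDerivAt (fun z : ℝ => (z - a)⁺ ^ 3) (3 * (x - a)⁺ ^ 2) x :=
    (hasDerivAt_posPart_pow (n := 3) (by norm_num) (x - a)).comp_sub_const x a
  have frho_eventuallyEq := (lt_mem_nhds hx).mono fun z hz => frho_eq_of_nonneg hρ hz.le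
  have hasDerivAt_formula := (((((hasDerivAt_pow 3 x).const_mul (ρ / 3)).add
    ((hasDerivAt_pow 2 x).const_mul ((1 - ρ) / 2))).add_const ((ρ - 1) ^ 3 / (6 * ρ ^ 2))).sub
      ((hasDerivAt_shift 1).const_mul (2 * ρ / 3))).add
        ((hasDerivAt_shift (3 / 2)).const_mul (ρ / 3))
  refine (hasDerivAt_formula.congr_of_eventuallyEq frho_eventuallyEq).congr_deriv ?_
  push_cast
  ring

theorem gradStep_frho_of_nonneg (hρ : ρ ≠ 0) (hx : 0 ≤ x) :
    gradStep (frho ρ) x = ρ * (x * (1 - x) + 2 * (x - 1)⁺ ^ 2 - (x - 3 / 2)⁺ ^ 2) := by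
  rcases hx.eq_or_lt with rfl | hx
  · rw [(odd_gradStep (even_frho ρ)).map_zero, posPart_of_nonpos (by norm_num),
      posPart_of_nonpos (by norm_num)]
    ring
  · rw [gradStep, (hasDerivAt_frho_of_pos hρ hx).deriv]
    ring

theorem eqOn_gradStep_frho_logisticMap (hρ : ρ ≠ 0) :
    EqOn (gradStep (frho ρ)) (logisticMap ρ) (Icc 0 1) := by
  intro x hx
  rw [gradStep_frho_of_nonneg hρ hx.1, posPart_of_nonpos (by linarith [hx.2]),
    posPart_of_nonpos (by linarith [hx.2]), logisticMap]
  ring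

theorem abs_gradStep_frho_le (hρ : 0 < ρ) (x : ℝ) : |gradStep (frho ρ) x| ≤ ρ / 4 := by
  wlog hx : 0 ≤ x generalizing x
  · simpa only [(odd_gradStep (even_frho ρ)).eq, abs_neg] using this (-x) (by linarith)
  have profile_bound : |x * (1 - x) + 2 * (x - 1)⁺ ^ 2 - (x - 3 / 2)⁺ ^ 2| ≤ 1 / 4 := by
    rw [abs_le]
    rcases le_total x 1 with h₁ | h₁
    · rw [posPart_of_nonpos (by linarith), posPart_of_nonpos (by linarith)]
      constructor <;> nlinarith [sq_nonneg (x - 1 / 2)]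
    rw [posPart_of_nonneg (by linarith : 0 ≤ x - 1)]
    rcases le_total x (3 / 2) with h₂ | h₂
    · rw [posPart_of_nonpos (by linarith)]
      constructor <;> nlinarith [sq_nonneg (x - 3 / 2)]
    · rw [posPart_of_nonneg (by linarith)]
      constructor <;> linarith
  calc |gradStep (frho ρ) x|
      = ρ * |x * (1 - x) + 2 * (x - 1)⁺ ^ 2 - (x - 3 / 2)⁺ ^ 2| := by
        rw [gradStep_frho_of_nonneg hρ.ne' hx, abs_mul, abs_of_pos hρ]
    _ ≤ ρ * (1 / 4) := by gcongr
    _ = ρ / 4 := by ring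

theorem exists_tendsto_of_gradStep_frho_orbit {y : ℕ → ℝ} (hρ₀ : 0 < ρ) (hρ₃ : ρ < 3)
    (hy : IsForwardOrbit (gradStep (frho ρ)) y) (h0 : y 0 ∈ Icc 0 1) :
    ∃ l, Tendsto y atTop (𝓝 l) := by
  have heq := eqOn_gradStep_frho_logisticMap hρ₀.ne'
  have hmaps := (mapsTo_logisticMap_Icc hρ₀.le (by linarith)).congr heq.symm
  exact exists_tendsto_of_logistic_orbit hρ₀.le hρ₃
    (hy.congr_of_mem heq (hy.mem_of_mapsTo hmaps h0)) h0

end GradientStep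

/-- For every `ρ ∈ (0, 3)` and every initial point `x₀ ∈ ℝ`,
the gradient-descent sequence with step-size 1 on `f_ρ` converges. -/
theorem frho_gd_converges (ρ : ℝ) (hρ : ρ ∈ Set.Ioo (0 : ℝ) 3)
    (x0 : ℝ) (x : ℕ → ℝ) (hx0 : x 0 = x0)
    (hrec : ∀ t, x (t + 1) = x t - deriv (frho ρ) (x t)) :
    ∃ l : ℝ, Filter.Tendsto x Filter.atTop (nhds l) := by
  have orbit : IsForwardOrbit (gradStep (frho ρ)) x := hrec
  obtain ⟨lower, upper⟩ : -(ρ / 4) ≤ x 1 ∧ x 1 ≤ ρ / 4 :=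
    abs_le.1 (orbit 0 ▸ abs_gradStep_frho_le hρ.1 (x 0))
  suffices ∃ l, Tendsto (fun t => x (t + 1)) atTop (𝓝 l) by
    simpa only [tendsto_add_atTop_iff_nat] using this
  rcases le_total 0 (x 1) with nonneg | nonpos
  · exact exists_tendsto_of_gradStep_frho_orbit hρ.1 hρ.2 orbit.shift
      ⟨nonneg, by linarith [hρ.2]⟩
  · obtain ⟨l, hl⟩ := exists_tendsto_of_gradStep_frho_orbit hρ.1 hρ.2
      (orbit.shift.neg (odd_gradStep (even_frho ρ))) ⟨neg_nonneg.2 nonpos, by linarith [hρ.2]⟩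
    exact ⟨-l, by simpa only [neg_neg] using hl.neg⟩
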